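/- Let I, J ≥ 3, α, β ∈ ℝ, and ε_k, η_k, γ_k ∈ ℝ with s_k := 1+2ε_k+γ_k (k = 1,2). Define R₁(2) = s₁ and R₁(i) = s₁ + (η₁²−ε₁²)/R₁(i−1) for 3 ≤ i ≤ I−1, and R₂(J−1) = s₂ and R₂(j) = s₂ + (η₂²−ε₂²)/R₂(j+1) for 2 ≤ j ≤ J−2; assume R₁(i) ≠ 0 for 2 ≤ i ≤ I−1, R₂(j) ≠ 0 for 2 ≤ j ≤ J−1, (α+1)R₁(I−1) + (η₁−ε₁) ≠ 0, and (β−1)R₂(2) + (η₂+ε₂) ≠ 0. Suppose the error sequences e₁^m ∈ ℝ^I, e₂^m ∈ ℝ^J satisfy, for every m ≥ 1: e₁^m_1 = 0 and e₂^m_J = 0; −(η₁+ε₁)e₁^m_{i−1} + s₁ e₁^m_i + (η₁−ε₁)e₁^m_{i+1} = 0 for 2 ≤ i ≤ I−1; −(η₂+ε₂)e₂^m_{j−1} + s₂ e₂^m_j + (η₂−ε₂)e₂^m_{j+1} = 0 for 2 ≤ j ≤ J−1; and the optimized interface conditions (e₁^m_I − e₁^m_{I−1}) + α e₁^m_I =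 (e₂^{m−1}_2 − e₂^{m−1}_1) + α e₂^{m−1}_2 and (e₂^m_2 − e₂^m_1) + β e₂^m_1 = (e₁^{m−1}_I − e₁^{m−1}_{I−1}) + β e₁^{m−1}_{I−1}. Then, with ρ̄ := −[((α+1)(η₂+ε₂) − R₂(2))·((β−1)(η₁−ε₁) − R₁(I−1))] / [((α+1)R₁(I−1) + (η₁−ε₁))·((β−1)R₂(2) + (η₂+ε₂))], for every m ≥ 1 one has e₁^{m+2}_i = ρ̄·e₁^m_i for all 1 ≤ i ≤ I and e₂^{m+2}_j = ρ̄·e₂^m_j for all 1 ≤ j ≤ J. -/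

import Mathlib

/-- Contraction factor of the implicit Schwarz iteration with optimized (Robin-type)
interface conditions with parameters `α, β` for two coupled linear
advection–diffusion–reaction equations. -/
theorem implicit_schwarz_contraction_optimized
    (I J : ℕ) (hI : 3 ≤ I) (hJ : 3 ≤ J) (α β : ℝ)
    (ε₁ ε₂ η₁ η₂ γ₁ γ₂ : ℝ)
    (R₁ R₂ : ℕ → ℝ)
    (hR₁base : R₁ 2 = 1 + 2 * ε₁ + γ₁)
    (hR₁rec : ∀ i : ℕ, 3 ≤ i → i ≤ I - 1 →
      R₁ i = 1 + 2 * ε₁ + γ₁ + (η₁ ^ 2 - ε₁ ^ 2) / R₁ (i - 1))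
    (hR₂base : R₂ (J - 1) = 1 + 2 * ε₂ + γ₂)
    (hR₂rec : ∀ j : ℕ, 2 ≤ j → j ≤ J - 2 →
      R₂ j = 1 + 2 * ε₂ + γ₂ + (η₂ ^ 2 - ε₂ ^ 2) / R₂ (j + 1))
    (hR₁ne : ∀ i : ℕ, 2 ≤ i → i ≤ I - 1 → R₁ i ≠ 0)
    (hR₂ne : ∀ j : ℕ, 2 ≤ j → j ≤ J - 1 → R₂ j ≠ 0)
    (hden₁ : (α + 1) * R₁ (I - 1) + (η₁ - ε₁) ≠ 0)
    (hden₂ : (β - 1) * R₂ 2 + (η₂ + ε₂) ≠ 0)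
    (e₁ e₂ : ℕ → ℕ → ℝ)
    (hb₁ : ∀ m : ℕ, 1 ≤ m → e₁ m 1 = 0)
    (hb₂ : ∀ m : ℕ, 1 ≤ m → e₂ m J = 0)
    (heq₁ : ∀ m : ℕ, 1 ≤ m → ∀ i : ℕ, 2 ≤ i → i ≤ I - 1 →
      -(η₁ + ε₁) * e₁ m (i - 1) + (1 + 2 * ε₁ + γ₁) * e₁ m i
        + (η₁ - ε₁) * e₁ m (i + 1) = 0)
    (heq₂ : ∀ m : ℕ, 1 ≤ m → ∀ j : ℕ, 2 ≤ j → j ≤ J - 1 →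
      -(η₂ + ε₂) * e₂ m (j - 1) + (1 + 2 * ε₂ + γ₂) * e₂ m j
        + (η₂ - ε₂) * e₂ m (j + 1) = 0)
    (hint₁ : ∀ m : ℕ,
      (e₁ (m + 1) I - e₁ (m + 1) (I - 1)) + α * e₁ (m + 1) I
        = (e₂ m 2 - e₂ m 1) + α * e₂ m 2)
    (hint₂ : ∀ m : ℕ,
      (e₂ (m + 1) 2 - e₂ (m + 1) 1) + β * e₂ (m + 1) 1
        = (e₁ m I - e₁ m (I - 1)) + β * e₁ m (I - 1)) :
    ∀ m : ℕ, 1 ≤ m →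
      (∀ i : ℕ, 1 ≤ i → i ≤ I →
        e₁ (m + 2) i
          = -(((α + 1) * (η₂ + ε₂) - R₂ 2) * ((β - 1) * (η₁ - ε₁) - R₁ (I - 1)))
              / (((α + 1) * R₁ (I - 1) + (η₁ - ε₁)) * ((β - 1) * R₂ 2 + (η₂ + ε₂)))
              * e₁ m i) ∧
      (∀ j : ℕ, 1 ≤ j → j ≤ J →
        e₂ (m + 2) j
          = -(((α + 1) * (η₂ + ε₂) - R₂ 2) * ((β - 1) * (η₁ - ε₁) - R₁ (I - 1)))
              / (((α + 1) * R₁ (I - 1) + (η₁ - ε₁)) * ((β - 1) * R₂ 2 + (η₂ + ε₂)))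
              * e₂ m j) := by
  have key₁ : ∀ m : ℕ, 1 ≤ m → ∀ i : ℕ, 2 ≤ i → i ≤ I - 1 →
      R₁ i * e₁ m i = -(η₁ - ε₁) * e₁ m (i + 1) := by
    intro m hm i hi
    induction i, hi using Nat.le_induction with
    | base =>
      intro h
      have h1 := heq₁ m hm 2 le_rfl h
      have h2 := hb₁ m hm
      simp only [Nat.add_one_sub_one, Nat.reduceSub] at h1
      rw [h2] at h1
      rw [hR₁base]
      linarith
    | succ i hi ih =>
      intro h
      have h1 := heq₁ m hm (i + 1) (by omega) h
      have h2 := hR₁rec (i + 1) (by omega) h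
      have h3 := ih (by omega)
      have h4 := hR₁ne i hi (by omega)
      rw [Nat.add_sub_cancel] at h1 h2
      have h5 : e₁ m i = -(η₁ - ε₁) * e₁ m (i + 1) / R₁ i := by
        rw [eq_div_iff h4, ← h3]; ring
      rw [h5] at h1
      rw [h2]
      linear_combination h1
  have key₂ : ∀ m : ℕ, 1 ≤ m → ∀ k : ℕ, ∀ j : ℕ, 2 ≤ j → j + k = J - 1 →
      R₂ j * e₂ m j = (η₂ + ε₂) * e₂ m (j - 1) := by
    intro m hm k
    induction k with
    | zero =>
      intro j hj h
      have hj' : j = J - 1 := by omega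
      have h1 := heq₂ m hm j hj (by omega)
      have h2 := hb₂ m hm
      have h3 : j + 1 = J := by omega
      rw [h3, h2] at h1
      rw [← hj'] at hR₂base
      rw [hR₂base]
      linarith
    | succ k ih =>
      intro j hj h
      have h1 := heq₂ m hm j hj (by omega)
      have h2 := hR₂rec j hj (by omega)
      have h3 := ih (j + 1) (by omega) (by omega)
      have h4 := hR₂ne (j + 1) (by omega) (by omega)
      rw [Nat.add_sub_cancel] at h3
      have h5 : e₂ m (j + 1) = (η₂ + ε₂) * e₂ m j / R₂ (j + 1) := by
        rw [eq_div_iff h4, ← h3]; ring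
      rw [h5] at h1
      rw [h2]
      linear_combination h1
  have a₁ : ∀ m : ℕ, 1 ≤ m → R₁ (I - 1) * e₁ m (I - 1) = -(η₁ - ε₁) * e₁ m I := by
    intro m hm
    have h := key₁ m hm (I - 1) (by omega) le_rfl
    rwa [show I - 1 + 1 = I by omega] at h
  have a₂ : ∀ m : ℕ, 1 ≤ m → R₂ 2 * e₂ m 2 = (η₂ + ε₂) * e₂ m 1 := by
    intro m hm
    exact key₂ m hm (J - 3) 2 le_rfl (by omega)
  have r₁ := hR₁ne (I - 1) (by omega) le_rfl
  have r₂ := hR₂ne 2 le_rfl (by omega)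
  have s₁ : ∀ m : ℕ, 1 ≤ m → R₂ 2 * (((α + 1) * R₁ (I - 1) + (η₁ - ε₁)) * e₁ (m + 1) I)
      = R₁ (I - 1) * (((α + 1) * (η₂ + ε₂) - R₂ 2) * e₂ m 1) := by
    intro m hm
    linear_combination R₂ 2 * R₁ (I - 1) * hint₁ m + R₂ 2 * a₁ (m + 1) (by omega)
      + R₁ (I - 1) * (α + 1) * a₂ m hm
  have s₂ : ∀ m : ℕ, 1 ≤ m → R₁ (I - 1) * (((β - 1) * R₂ 2 + (η₂ + ε₂)) * e₂ (m + 1) 1)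
      = -(R₂ 2 * (((β - 1) * (η₁ - ε₁) - R₁ (I - 1)) * e₁ m I)) := by
    intro m hm
    linear_combination R₂ 2 * R₁ (I - 1) * hint₂ m - R₁ (I - 1) * a₂ (m + 1) (by omega)
      + R₂ 2 * (β - 1) * a₁ m hm
  intro m hm
  set D₁ := (α + 1) * R₁ (I - 1) + (η₁ - ε₁) with hD₁
  set D₂ := (β - 1) * R₂ 2 + (η₂ + ε₂) with hD₂
  set A := (α + 1) * (η₂ + ε₂) - R₂ 2 with hA
  set B := (β - 1) * (η₁ - ε₁) - R₁ (I - 1) with hB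
  have t₁ : e₁ (m + 2) I = -(A * B) / (D₁ * D₂) * e₁ m I := by
    rw [div_mul_eq_mul_div, eq_div_iff (mul_ne_zero hden₁ hden₂)]
    apply mul_left_cancel₀ r₂
    linear_combination D₂ * s₁ (m + 1) (by omega) + A * s₂ m hm
  have t₂ : e₂ (m + 2) 1 = -(A * B) / (D₁ * D₂) * e₂ m 1 := by
    rw [div_mul_eq_mul_div, eq_div_iff (mul_ne_zero hden₁ hden₂)]
    apply mul_left_cancel₀ r₁
    linear_combination D₁ * s₂ (m + 1) (by omega) - B * s₁ m hm
  generalize -(A * B) / (D₁ * D₂) = ρ at t₁ t₂ ⊢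
  constructor
  · have h : ∀ k i : ℕ, 1 ≤ i → i + k = I → e₁ (m + 2) i = ρ * e₁ m i := by
      intro k
      induction k with
      | zero =>
        intro i _ hi
        rw [show i = I by omega]
        exact t₁
      | succ k ih =>
        intro i h1 hi
        rcases Nat.eq_or_lt_of_le h1 with h | h
        · rw [← h, hb₁ m hm, hb₁ (m + 2) (by omega), mul_zero]
        · apply mul_left_cancel₀ (hR₁ne i (by omega) (by omega))
          linear_combination key₁ (m + 2) (by omega) i (by omega) (by omega)
            - ρ * key₁ m hm i (by omega) (by omega)
            - (η₁ - ε₁) * ih (i + 1) (by omega) (by omega)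
    intro i h1 h2
    exact h (I - i) i h1 (by omega)
  · intro j hj
    induction j, hj using Nat.le_induction with
    | base => intro _; exact t₂
    | succ j hj ih =>
      intro h
      rcases Nat.eq_or_lt_of_le h with h' | h'
      · rw [h', hb₂ m hm, hb₂ (m + 2) (by omega), mul_zero]
      · apply mul_left_cancel₀ (hR₂ne (j + 1) (by omega) (by omega))
        have k1 := key₂ (m + 2) (by omega) (J - 1 - (j + 1)) (j + 1) (by omega) (by omega)
        have k2 := key₂ m hm (J - 1 - (j + 1)) (j + 1) (by omega) (by omega)
        rw [Nat.add_sub_cancel] at k1 k2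
        linear_combination k1 - ρ * k2 + (η₂ + ε₂) * ih (by omega)
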